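/- Let y ∈ V^n be a probability vector with positive components, let 1 < d < n−1, and let c be a vector with positive non-increasing components. If l_u(c) > max{y_d/y_1, y_n/y_{d+1}} and g_u(c) < y_{d+1}/y_d, then for every x ∈ K_d(y) one has x⊗c ◁ y⊗c. -/

import Mathlib

noncomputable section

/-- `eSum x l` : the sum of the `l` largest components of `x`. -/
def eSum {n : ℕ} (x : Fin n → ℝ) (l : ℕ) : ℝ :=
  sSup {r | ∃ s : Finset (Fin n), s.card = l ∧ r = ∑ i ∈ s, x i}

/-- `ESum x l` : the sum of the `l` smallest components of `x`. -/
def ESum {n : ℕ} (x : Fin n → ℝ) (l : ℕ) : ℝ :=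
  sInf {r | ∃ s : Finset (Fin n), s.card = l ∧ r = ∑ i ∈ s, x i}

/-- Majorization `x ≺ y` (for vectors with equal total sum):
`e_l(x) ≤ e_l(y)` for all `1 ≤ l ≤ n`. -/
def Maj {n : ℕ} (x y : Fin n → ℝ) : Prop :=
  (∑ i, x i) = (∑ i, y i) ∧ ∀ l : ℕ, 1 ≤ l → l ≤ n → eSum x l ≤ eSum y l

/-- Strict majorization `x ◁ y`: equal total sums and `e_l(x) < e_l(y)` for all
`1 ≤ l ≤ n - 1`. -/
def SMaj {n : ℕ} (x y : Fin n → ℝ) : Prop :=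
  (∑ i, x i) = (∑ i, y i) ∧ ∀ l : ℕ, 1 ≤ l → l + 1 ≤ n → eSum x l < eSum y l

/-- Super-majorization `x ≺ʷ y` : `E_l(x) ≥ E_l(y)` for all `1 ≤ l ≤ n`. -/
def SupMaj {n : ℕ} (x y : Fin n → ℝ) : Prop :=
  ∀ l : ℕ, 1 ≤ l → l ≤ n → ESum y l ≤ ESum x l

/-- Strict super-majorization `x ◁ʷ y` : `E_l(x) > E_l(y)` for all `1 ≤ l ≤ n`. -/
def SSupMaj {n : ℕ} (x y : Fin n → ℝ) : Prop :=
  ∀ l : ℕ, 1 ≤ l → l ≤ n → ESum y l < ESum x l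

/-- Tensor product of two vectors: the vector of all pairwise products. -/
def tensor {m k : ℕ} (x : Fin m → ℝ) (c : Fin k → ℝ) : Fin (m * k) → ℝ :=
  fun i => x (finProdFinEquiv.symm i).1 * c (finProdFinEquiv.symm i).2

/-- `k`-fold tensor power of a vector. -/
def tpow {n : ℕ} (x : Fin n → ℝ) (k : ℕ) : Fin (n ^ k) → ℝ :=
  fun i => ∏ j : Fin k, x (finFunctionFinEquiv.symm i j)

/-- `V^n` : probability vectors with components in non-increasing order. -/
def Vn (n : ℕ) : Set (Fin n → ℝ) :=
  {x | (∀ i, 0 ≤ x i) ∧ (∑ i, x i) = 1 ∧ Antitone x}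

/-- `S(y)` : members of `V^n` majorized by `y`. -/
def Sset {n : ℕ} (y : Fin n → ℝ) : Set (Fin n → ℝ) :=
  {x ∈ Vn n | Maj x y}

/-- `T(y,c)` : members of `V^n` with `x ⊗ c ≺ y ⊗ c`. -/
def Tcat {n k : ℕ} (y : Fin n → ℝ) (c : Fin k → ℝ) : Set (Fin n → ℝ) :=
  {x ∈ Vn n | Maj (tensor x c) (tensor y c)}

/-- Local uniformity `l_u(c)` : the minimum of the consecutive ratios `c_{i+1}/c_i`. -/
def lu {k : ℕ} (c : Fin k → ℝ) : ℝ :=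
  sInf {r | ∃ i : ℕ, ∃ h : i + 1 < k, r = c ⟨i + 1, h⟩ / c ⟨i, Nat.lt_of_succ_lt h⟩}

/-- Global uniformity `g_u(c) = c_k / c_1` (smallest over largest component of a
non-increasingly ordered vector). -/
def gu {k : ℕ} (c : Fin k → ℝ) : ℝ :=
  if h : 0 < k then c ⟨k - 1, Nat.sub_lt h Nat.one_pos⟩ / c ⟨0, h⟩ else 1

/-- Largest component. -/
def maxc {n : ℕ} (x : Fin n → ℝ) : ℝ := sSup (Set.range x)

/-- Smallest component. -/
def minc {n : ℕ} (x : Fin n → ℝ) : ℝ := sInf (Set.range x)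

/-- `c'` is a (contiguous) segment of `c`. -/
def IsSegment {j k : ℕ} (c' : Fin j → ℝ) (c : Fin k → ℝ) : Prop :=
  ∃ (i : ℕ) (_h : i + j ≤ k), ∀ t : Fin j, c' t = c ⟨i + t, by have := t.isLt; omega⟩

/-- The first `d` components of a vector. -/
def take {n : ℕ} (x : Fin n → ℝ) (d : ℕ) (h : d ≤ n) : Fin d → ℝ :=
  fun i => x ⟨i, Nat.lt_of_lt_of_le i.isLt h⟩

/-- The components of a vector after the first `d` ones. -/
def drop {n : ℕ} (x : Fin n → ℝ) (d : ℕ) : Fin (n - d) → ℝ :=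
  fun i => x ⟨d + i, by have := i.isLt; omega⟩

/-- The segment `(c_i, …, c_j)` of `c` (`0`-based indices). -/
def seg {k : ℕ} (c : Fin k → ℝ) (i j : ℕ) (hij : i ≤ j) (hj : j < k) :
    Fin (j - i + 1) → ℝ :=
  fun t => c ⟨i + t, by have := t.isLt; omega⟩

/-- `(c_i, …, c_j)` is a block of the decomposition `[c]_α` of the (positive,
non-increasingly ordered) vector `c` according to `α`: ratios within the block
exceed `α`, and the ratios at the two boundaries of the block are `≤ α`
(or the block touches an end of `c`). -/
def IsBlock {k : ℕ} (α : ℝ) (c : Fin k → ℝ) (i j : ℕ) : Prop :=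
  ∃ (hij : i ≤ j) (hj : j < k),
    (i = 0 ∨ c ⟨i, by omega⟩ / c ⟨i - 1, by omega⟩ ≤ α) ∧
    (j = k - 1 ∨ ∃ hj1 : j + 1 < k, c ⟨j + 1, hj1⟩ / c ⟨j, hj⟩ ≤ α) ∧
    (∀ (t : ℕ) (ht1 : i ≤ t) (ht2 : t < j), α < c ⟨t + 1, by omega⟩ / c ⟨t, by omega⟩)

/-- `T_k(y)` : states transformable to `y` with a `k`-dimensional catalyst. -/
def Tk {n : ℕ} (k : ℕ) (y : Fin n → ℝ) : Set (Fin n → ℝ) :=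
  {x ∈ Vn n | ∃ c : Fin k → ℝ, (∀ i, 0 < c i) ∧ (∑ i, c i) = 1 ∧ Antitone c ∧
    Maj (tensor x c) (tensor y c)}

/-- `M_k(y)` : states `x` with `x^{⊗k} ≺ y^{⊗k}`. -/
def Mk {n : ℕ} (k : ℕ) (y : Fin n → ℝ) : Set (Fin n → ℝ) :=
  {x ∈ Vn n | Maj (tpow x k) (tpow y k)}

/-- `T(y)` : states transformable to `y` with some catalyst. -/
def Tinf {n : ℕ} (y : Fin n → ℝ) : Set (Fin n → ℝ) :=
  {x ∈ Vn n | ∃ (k : ℕ) (c : Fin k → ℝ), 0 < k ∧ (∀ i, 0 < c i) ∧ (∑ i, c i) = 1 ∧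
    Antitone c ∧ Maj (tensor x c) (tensor y c)}

/-- `M(y)` : states `x` with `x^{⊗k} ≺ y^{⊗k}` for some `k ≥ 1`. -/
def Minf {n : ℕ} (y : Fin n → ℝ) : Set (Fin n → ℝ) :=
  {x ∈ Vn n | ∃ k : ℕ, 1 ≤ k ∧ Maj (tpow x k) (tpow y k)}

/-- `S^λ(y)` : states `x` with `x ≺ʷ λ y`. -/
def Slam {n : ℕ} (lam : ℝ) (y : Fin n → ℝ) : Set (Fin n → ℝ) :=
  {x ∈ Vn n | SupMaj x (fun i => lam * y i)}

/-- `T^λ(y,c)` : states `x` with `x ⊗ c ≺ʷ λ (y ⊗ c)`. -/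
def Tlamc {n k : ℕ} (lam : ℝ) (y : Fin n → ℝ) (c : Fin k → ℝ) : Set (Fin n → ℝ) :=
  {x ∈ Vn n | SupMaj (tensor x c) (fun i => lam * tensor y c i)}

/-- `T_k^λ(y)`. -/
def Tklam {n : ℕ} (k : ℕ) (lam : ℝ) (y : Fin n → ℝ) : Set (Fin n → ℝ) :=
  {x ∈ Vn n | ∃ c : Fin k → ℝ, (∀ i, 0 < c i) ∧ (∑ i, c i) = 1 ∧ Antitone c ∧
    SupMaj (tensor x c) (fun i => lam * tensor y c i)}

/-- `M_k^λ(y)`. -/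
def Mklam {n : ℕ} (k : ℕ) (lam : ℝ) (y : Fin n → ℝ) : Set (Fin n → ℝ) :=
  {x ∈ Vn n | SupMaj (tpow x k) (fun i => lam ^ k * tpow y k i)}

/-- `T^λ(y)`. -/
def Tlaminf {n : ℕ} (lam : ℝ) (y : Fin n → ℝ) : Set (Fin n → ℝ) :=
  {x ∈ Vn n | ∃ (k : ℕ) (c : Fin k → ℝ), 0 < k ∧ (∀ i, 0 < c i) ∧ (∑ i, c i) = 1 ∧
    Antitone c ∧ SupMaj (tensor x c) (fun i => lam * tensor y c i)}

/-- `M^λ(y)`. -/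
def Mlaminf {n : ℕ} (lam : ℝ) (y : Fin n → ℝ) : Set (Fin n → ℝ) :=
  {x ∈ Vn n | ∃ k : ℕ, 1 ≤ k ∧ SupMaj (tpow x k) (fun i => lam ^ k * tpow y k i)}

/-- `K_d(y)` : concatenations `x = x' ⊕ x''` with `x' ◁ y'` and `x'' ◁ y''`,
where `y'` is the first-`d` part of `y` and `y''` the rest. -/
def Kd {n : ℕ} (y : Fin n → ℝ) (d : ℕ) (h : d ≤ n) : Set (Fin n → ℝ) :=
  {x ∈ Vn n | SMaj (take x d h) (take y d h) ∧ SMaj (drop x d) (drop y d)}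

/-- `y(d)` : first `d` components equal to `e_d(y)/d`, the last `n-d` equal to
`(1 - e_d(y))/(n-d)`. -/
def yvec {n : ℕ} (y : Fin n → ℝ) (d : ℕ) : Fin n → ℝ :=
  fun i => if (i : ℕ) < d then eSum y d / d else (1 - eSum y d) / (n - d)

/-- `K_d^λ(y)` : states `x ∈ S^λ(y)` with `E_l(x) = λ E_l(y)` iff `l = n - d`. -/
def Kdlam {n : ℕ} (lam : ℝ) (y : Fin n → ℝ) (d : ℕ) : Set (Fin n → ℝ) :=
  {x ∈ Vn n | SupMaj x (fun i => lam * y i) ∧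
    ∀ l : ℕ, 1 ≤ l → l ≤ n → (ESum x l = lam * ESum y l ↔ l = n - d)}

/-!
A set of cells of the `n × k` grid that is optimal for `x ⊗ c` may be taken to consist, in each
column `j`, of the cells carrying the `r j` largest components of `x`. Hence `e_l(x ⊗ c)` is the
maximum of `∑ j, e_{r j}(x) c_j` over the height profiles `r ≤ n` with `∑ j, r j = l`, and passing
from `x` to `y` with `x ≺ y` increases each of these sums, strictly unless every `r j` is a contact
index, i.e. `e_{r j}(x) = e_{r j}(y)`. For `x ∈ K_d(y)` the contact indices are `0`, `d` and `n`,
and such a profile is not optimal for `y ⊗ c`: if it is constantly `d`, the bound on `g_u(c)` makes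
it profitable to exchange the cell `(d, k)` for `(d + 1, 1)`; otherwise two neighbouring columns
have different heights and the bound on `l_u(c)` makes an exchange between them profitable.
-/

section LargestComponents

variable {n : ℕ}

lemma isGreatest_eSum {l : ℕ} (x : Fin n → ℝ) (hl : l ≤ n) :
    IsGreatest {r | ∃ s : Finset (Fin n), s.card = l ∧ r = ∑ i ∈ s, x i} (eSum x l) := by
  have hfin : {r | ∃ s : Finset (Fin n), s.card = l ∧ r = ∑ i ∈ s, x i}.Finite := by
    refine (Set.finite_range fun s : Finset (Fin n) ↦ ∑ i ∈ s, x i).subset ?_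
    rintro _ ⟨s, _, rfl⟩
    exact ⟨s, rfl⟩
  obtain ⟨s, -, hs⟩ : ∃ s ⊆ (Finset.univ : Finset (Fin n)), s.card = l :=
    Finset.exists_subset_card_eq (by simpa using hl)
  exact hfin.isCompact.isGreatest_sSup ⟨_, s, hs, rfl⟩

lemma sum_le_eSum (x : Fin n → ℝ) (s : Finset (Fin n)) : ∑ i ∈ s, x i ≤ eSum x s.card :=
  (isGreatest_eSum x (card_finset_fin_le s)).2 ⟨s, rfl, rfl⟩

lemma exists_sum_eq_eSum {l : ℕ} (x : Fin n → ℝ) (hl : l ≤ n) :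
    ∃ s : Finset (Fin n), s.card = l ∧ eSum x l = ∑ i ∈ s, x i :=
  (isGreatest_eSum x hl).1

lemma eSum_zero (x : Fin n → ℝ) : eSum x 0 = 0 := by
  obtain ⟨s, hs, h⟩ := exists_sum_eq_eSum x n.zero_le
  rw [h, Finset.card_eq_zero.1 hs, Finset.sum_empty]

lemma eSum_self (x : Fin n → ℝ) : eSum x n = ∑ i, x i := by
  obtain ⟨s, hs, h⟩ := exists_sum_eq_eSum x le_rfl
  rw [h, Finset.eq_univ_of_card s (by simpa using hs)]

lemma sum_lt_eSum_of_exchange {x : Fin n → ℝ} {s : Finset (Fin n)} {p q : Fin n} (hp : p ∈ s)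
    (hq : q ∉ s) (hpq : x p < x q) : ∑ i ∈ s, x i < eSum x s.card := by
  have hq' : q ∉ s.erase p := fun h ↦ hq (Finset.mem_of_mem_erase h)
  calc ∑ i ∈ s, x i = x p + ∑ i ∈ s.erase p, x i := (Finset.add_sum_erase s x hp).symm
    _ < x q + ∑ i ∈ s.erase p, x i := by gcongr
    _ = ∑ i ∈ insert q (s.erase p), x i := (Finset.sum_insert hq').symm
    _ ≤ eSum x (insert q (s.erase p)).card := sum_le_eSum x _
    _ = eSum x s.card := by
      rw [Finset.card_insert_of_notMem hq', Finset.card_erase_add_one hp]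

lemma sum_le_sum_of_antitone_of_isLowerSet {ι M : Type*} [LinearOrder ι] [AddCommMonoid M]
    [PartialOrder M] [IsOrderedCancelAddMonoid M] {x : ι → M} (hx : Antitone x) {s t : Finset ι}
    (ht : IsLowerSet (t : Set ι)) (hst : s.card = t.card) : ∑ i ∈ s, x i ≤ ∑ i ∈ t, x i := by
  rw [← Finset.sum_sdiff_le_sum_sdiff]
  have hle {i j : ι} (hi : i ∈ s \ t) (hj : j ∈ t \ s) : j ≤ i :=
    le_of_not_ge fun hij ↦
      (Finset.mem_sdiff.1 hi).2 (ht hij (Finset.mem_sdiff.1 hj).1)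
  let e : ↥(s \ t) ≃ ↥(t \ s) := Finset.equivOfCardEq (Finset.card_sdiff_comm hst)
  calc ∑ i ∈ s \ t, x i = ∑ i : ↥(s \ t), x i := (Finset.sum_coe_sort _ x).symm
    _ ≤ ∑ i : ↥(s \ t), x (e i) := Finset.sum_le_sum fun i _ ↦ hx (hle i.2 (e i).2)
    _ = ∑ i : ↥(t \ s), x i := e.sum_comp fun i ↦ x i
    _ = ∑ i ∈ t \ s, x i := Finset.sum_coe_sort _ x

lemma eSum_card_of_isLowerSet {x : Fin n → ℝ} (hx : Antitone x) {t : Finset (Fin n)}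
    (ht : IsLowerSet (t : Set (Fin n))) : eSum x t.card = ∑ i ∈ t, x i := by
  obtain ⟨s, hs, h⟩ := exists_sum_eq_eSum x (card_finset_fin_le t)
  exact (h.trans_le (sum_le_sum_of_antitone_of_isLowerSet hx ht hs)).antisymm (sum_le_eSum x t)

lemma eSum_eq_sum_filter_lt {l : ℕ} {x : Fin n → ℝ} (hx : Antitone x) (hl : l ≤ n) :
    eSum x l = ∑ i : Fin n with i.val < l, x i := by
  rw [← eSum_card_of_isLowerSet hx, Fin.card_filter_val_lt, min_eq_right hl]
  intro i j hji hi
  simp only [Finset.coe_filter, Finset.mem_univ, true_and, Set.mem_ofPred_eq] at hi ⊢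
  exact (Fin.le_def.1 hji).trans_lt hi

lemma eSum_eq_sum_take {l : ℕ} {x : Fin n → ℝ} (hx : Antitone x) (hl : l ≤ n) :
    eSum x l = ∑ i, take x l hl i := by
  have hmap : (Finset.univ.filter fun i : Fin n ↦ i.val < l) =
      Finset.univ.map (Fin.castLEEmb hl) := by
    ext i
    simp only [Finset.mem_filter, Finset.mem_univ, true_and, Finset.mem_map]
    exact ⟨fun h ↦ ⟨⟨i, h⟩, rfl⟩, by rintro ⟨j, rfl⟩; exact j.isLt⟩
  rw [eSum_eq_sum_filter_lt hx hl, hmap, Finset.sum_map]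
  rfl

end LargestComponents

section Concatenation

variable {n d r : ℕ} {x y : Fin n → ℝ}

lemma antitone_take (hx : Antitone x) (hd : d ≤ n) : Antitone (take x d hd) :=
  fun _ _ hij ↦ hx hij

lemma antitone_drop (hx : Antitone x) : Antitone (drop x d) :=
  fun _ _ hij ↦ hx (Fin.le_def.2 (Nat.add_le_add_left hij d))

lemma eSum_take (hx : Antitone x) (hd : d ≤ n) (hr : r ≤ d) :
    eSum (take x d hd) r = eSum x r := by
  rw [eSum_eq_sum_take (antitone_take hx hd) hr, eSum_eq_sum_take hx (hr.trans hd)]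
  rfl

lemma eSum_add (hx : Antitone x) (hdr : d + r ≤ n) :
    eSum x (d + r) = eSum x d + eSum (drop x d) r := by
  rw [eSum_eq_sum_take hx hdr, eSum_eq_sum_take hx (by omega),
    eSum_eq_sum_take (antitone_drop hx) (by omega), Fin.sum_univ_add]
  rfl

lemma eSum_eq_of_mem_kd {hd : d ≤ n} (hy : Antitone y) (hx : x ∈ Kd y d hd) :
    eSum x d = eSum y d := by
  rw [eSum_eq_sum_take hx.1.2.2 hd, eSum_eq_sum_take hy hd, hx.2.1.1]

lemma eSum_lt_of_mem_kd {hd : d ≤ n} (hy : Antitone y) (hx : x ∈ Kd y d hd) (hr0 : r ≠ 0)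
    (hrd : r ≠ d) (hrn : r < n) : eSum x r < eSum y r := by
  have hx_anti : Antitone x := hx.1.2.2
  rcases lt_or_gt_of_ne hrd with h | h
  · rw [← eSum_take hx_anti hd h.le, ← eSum_take hy hd h.le]
    exact hx.2.1.2 r (by omega) h
  · obtain ⟨s, rfl⟩ := Nat.exists_eq_add_of_le h.le
    rw [eSum_add hx_anti hrn.le, eSum_add hy hrn.le, eSum_eq_of_mem_kd hy hx]
    gcongr
    exact hx.2.2.2 s (by omega) (by omega)

lemma eq_zero_or_eq_or_eq_of_mem_kd {hd : d ≤ n} (hy : Antitone y) (hx : x ∈ Kd y d hd)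
    (hrn : r ≤ n) (hr : eSum x r = eSum y r) : r = 0 ∨ r = d ∨ r = n := by
  by_contra! h
  exact (eSum_lt_of_mem_kd hy hx h.1 h.2.1 (hrn.lt_of_ne h.2.2)).ne hr

lemma sum_eq_of_mem_kd {hd : d ≤ n} (hy : Antitone y) (hx : x ∈ Kd y d hd) :
    ∑ i, x i = ∑ i, y i := by
  have hsplit {z : Fin n → ℝ} (hz : Antitone z) : ∑ i, z i = eSum z d + ∑ i, drop z d i := by
    have := eSum_add hz (Nat.add_sub_cancel' hd).le
    rwa [Nat.add_sub_cancel' hd, eSum_self, eSum_self] at this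
  rw [hsplit hx.1.2.2, hsplit hy, eSum_eq_of_mem_kd hy hx, hx.2.2.1]

lemma kd_subset_sset {hd : d ≤ n} (hy : Antitone y) : Kd y d hd ⊆ Sset y := by
  intro x hx
  have hsum := sum_eq_of_mem_kd hy hx
  refine ⟨hx.1, hsum, fun l hl1 hln ↦ ?_⟩
  obtain rfl | hld := eq_or_ne l d
  · exact (eSum_eq_of_mem_kd hy hx).le
  obtain rfl | hln := hln.eq_or_lt
  · rw [eSum_self, eSum_self, hsum]
  · exact (eSum_lt_of_mem_kd hy hx (by omega) hld hln).le

end Concatenation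

section Tensor

variable {n k : ℕ}

/-- The set of indices of `x ⊗ c` whose cells `(i, j)` satisfy `i ∈ t j`, that is, the set of cells
of the `n × k` grid with prescribed columns. -/
def ofColumns (t : Fin k → Finset (Fin n)) : Finset (Fin (n * k)) :=
  Finset.univ.filter fun i ↦ (finProdFinEquiv.symm i).1 ∈ t (finProdFinEquiv.symm i).2

lemma mem_ofColumns {t : Fin k → Finset (Fin n)} {i : Fin n} {j : Fin k} :
    finProdFinEquiv (i, j) ∈ ofColumns t ↔ i ∈ t j := by
  simp only [ofColumns, Finset.mem_filter, Finset.mem_univ, true_and, Equiv.symm_apply_apply]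

lemma exists_eq_ofColumns (s : Finset (Fin (n * k))) : ∃ t, s = ofColumns t := by
  refine ⟨fun j ↦ Finset.univ.filter fun i ↦ finProdFinEquiv (i, j) ∈ s, ?_⟩
  simp only [ofColumns, Finset.mem_filter, Finset.mem_univ, true_and, Prod.mk.eta,
    Equiv.apply_symm_apply, Finset.filter_univ_mem]

lemma sum_ofColumns {M : Type*} [AddCommMonoid M] (t : Fin k → Finset (Fin n))
    (f : Fin (n * k) → M) :
    ∑ p ∈ ofColumns t, f p = ∑ j, ∑ i ∈ t j, f (finProdFinEquiv (i, j)) := by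
  rw [ofColumns, Finset.sum_filter, ← finProdFinEquiv.sum_comp, Fintype.sum_prod_type_right]
  simp

lemma card_ofColumns (t : Fin k → Finset (Fin n)) : (ofColumns t).card = ∑ j, (t j).card := by
  simp only [Finset.card_eq_sum_ones, sum_ofColumns]

lemma tensor_finProdFinEquiv (x : Fin n → ℝ) (c : Fin k → ℝ) (i : Fin n) (j : Fin k) :
    tensor x c (finProdFinEquiv (i, j)) = x i * c j := by
  rw [tensor, Equiv.symm_apply_apply]

lemma sum_ofColumns_tensor (t : Fin k → Finset (Fin n)) (x : Fin n → ℝ) (c : Fin k → ℝ) :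
    ∑ p ∈ ofColumns t, tensor x c p = ∑ j, (∑ i ∈ t j, x i) * c j := by
  simp only [sum_ofColumns, tensor_finProdFinEquiv, Finset.sum_mul]

lemma sum_tensor (x : Fin n → ℝ) (c : Fin k → ℝ) :
    ∑ p, tensor x c p = (∑ i, x i) * ∑ j, c j := by
  simp only [← finProdFinEquiv.sum_comp, tensor_finProdFinEquiv, Fintype.sum_mul_sum,
    Fintype.sum_prod_type]

lemma exists_eSum_tensor_le {l : ℕ} (x : Fin n → ℝ) {c : Fin k → ℝ} (hc : ∀ j, 0 ≤ c j)
    (hl : l ≤ n * k) :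
    ∃ r : Fin k → ℕ, (∀ j, r j ≤ n) ∧ ∑ j, r j = l ∧
      eSum (tensor x c) l ≤ ∑ j, eSum x (r j) * c j := by
  obtain ⟨s, rfl, hs⟩ := exists_sum_eq_eSum (tensor x c) hl
  obtain ⟨t, rfl⟩ := exists_eq_ofColumns s
  refine ⟨fun j ↦ (t j).card, fun j ↦ card_finset_fin_le (t j), (card_ofColumns t).symm, ?_⟩
  rw [hs, sum_ofColumns_tensor]
  gcongr with j
  · exact hc j
  · exact sum_le_eSum x (t j)

lemma sum_eSum_mul_le_eSum_tensor (x : Fin n → ℝ) (c : Fin k → ℝ) {r : Fin k → ℕ}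
    (hr : ∀ j, r j ≤ n) : ∑ j, eSum x (r j) * c j ≤ eSum (tensor x c) (∑ j, r j) := by
  choose t ht_card ht_sum using fun j ↦ exists_sum_eq_eSum x (hr j)
  simpa only [sum_ofColumns_tensor, card_ofColumns, ← ht_sum, ht_card] using
    sum_le_eSum (tensor x c) (ofColumns t)

lemma sum_eSum_mul_lt_eSum_tensor {x : Fin n → ℝ} (hx : Antitone x) {c : Fin k → ℝ}
    {r : Fin k → ℕ} (hr : ∀ j, r j ≤ n) {a b : Fin n} {i j : Fin k} (ha : a < r i) (hb : r j ≤ b)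
    (hab : x a * c i < x b * c j) :
    ∑ j, eSum x (r j) * c j < eSum (tensor x c) (∑ j, r j) := by
  have hcard : (ofColumns fun j ↦ Finset.univ.filter fun i : Fin n ↦ i.val < r j).card =
      ∑ j, r j := by
    simp only [card_ofColumns, Fin.card_filter_val_lt, min_eq_right (hr _)]
  have hlt := sum_lt_eSum_of_exchange (x := tensor x c)
    (s := ofColumns fun j ↦ Finset.univ.filter fun i : Fin n ↦ i.val < r j)
    (p := finProdFinEquiv (a, i)) (q := finProdFinEquiv (b, j))
    (mem_ofColumns.2 (by simpa using ha)) (mt mem_ofColumns.1 (by simpa using hb))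
    (by simpa only [tensor_finProdFinEquiv] using hab)
  simpa only [hcard, sum_ofColumns_tensor, ← eSum_eq_sum_filter_lt hx (hr _)] using hlt

end Tensor

section Majorization

variable {n k : ℕ}

lemma Maj.eSum_le {x y : Fin n → ℝ} (h : Maj x y) {l : ℕ} (hl : l ≤ n) :
    eSum x l ≤ eSum y l := by
  obtain rfl | hl0 := l.eq_zero_or_pos
  · rw [eSum_zero, eSum_zero]
  · exact h.2 l hl0 hl

lemma Maj.sMaj_tensor {x y : Fin n → ℝ} (h : Maj x y) {c : Fin k → ℝ} (hc : ∀ j, 0 < c j)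
    (hcontact : ∀ r : Fin k → ℕ, (∀ j, r j ≤ n) → (∀ j, eSum x (r j) = eSum y (r j)) →
      ∑ j, r j ≠ 0 → ∑ j, r j ≠ n * k →
      ∑ j, eSum y (r j) * c j < eSum (tensor y c) (∑ j, r j)) :
    SMaj (tensor x c) (tensor y c) := by
  refine ⟨by rw [sum_tensor, sum_tensor, h.1], fun l hl0 hln ↦ ?_⟩
  obtain ⟨r, hr, rfl, hle⟩ := exists_eSum_tensor_le x (fun j ↦ (hc j).le) (Nat.le_of_succ_le hln)
  refine hle.trans_lt ?_
  by_cases heq : ∀ j, eSum x (r j) = eSum y (r j)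
  · simp only [heq]
    exact hcontact r hr heq (by omega) (by omega)
  · obtain ⟨j₀, hj₀⟩ := not_forall.1 heq
    have hlt : ∑ j, eSum x (r j) * c j < ∑ j, eSum y (r j) * c j :=
      Finset.sum_lt_sum (fun j _ ↦ mul_le_mul_of_nonneg_right (h.eSum_le (hr j)) (hc j).le)
        ⟨j₀, Finset.mem_univ _,
          mul_lt_mul_of_pos_right ((h.eSum_le (hr j₀)).lt_of_ne hj₀) (hc j₀)⟩
    exact hlt.trans_le (sum_eSum_mul_le_eSum_tensor y c hr)

end Majorization

section Uniformity

variable {m : ℕ} {c : Fin (m + 1) → ℝ}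

lemma lu_le_div (c : Fin (m + 1) → ℝ) (i : Fin m) : lu c ≤ c i.succ / c i.castSucc := by
  refine csInf_le ?_ ⟨i, i.succ.isLt, rfl⟩
  refine ((Set.finite_range fun i : Fin m ↦ c i.succ / c i.castSucc).subset ?_).bddBelow
  rintro _ ⟨i, hi, rfl⟩
  exact ⟨⟨i, by omega⟩, rfl⟩

lemma lu_mul_castSucc_le_succ (hc : ∀ j, 0 < c j) (i : Fin m) :
    lu c * c i.castSucc ≤ c i.succ :=
  (le_div_iff₀ (hc _)).1 (lu_le_div c i)

lemma lu_mul_succ_le_castSucc (hc : ∀ j, 0 < c j) (hanti : Antitone c) (i : Fin m) :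
    lu c * c i.succ ≤ c i.castSucc := by
  have hstep : c i.succ ≤ c i.castSucc := hanti i.castSucc_lt_succ.le
  have hlu : lu c ≤ 1 := (lu_le_div c i).trans ((div_le_one (hc _)).2 hstep)
  exact (mul_le_of_le_one_left (hc _).le hlu).trans hstep

lemma gu_eq_last_div_zero (c : Fin (m + 1) → ℝ) : gu c = c (Fin.last m) / c 0 :=
  dif_pos m.succ_pos

end Uniformity

section Contact

variable {n m : ℕ} {y : Fin n → ℝ} {c : Fin (m + 1) → ℝ} {r : Fin (m + 1) → ℕ}

lemma sum_eSum_mul_lt_of_adjacent_ne (hy : Antitone y) (hy0 : ∀ i, 0 ≤ y i) (hc : ∀ j, 0 < c j)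
    (hanti : Antitone c) (hr : ∀ j, r j ≤ n)
    (hlu : ∀ i j, r j < r i → ∃ a b : Fin n, a < r i ∧ r j ≤ b ∧ y a < lu c * y b)
    {i : Fin m} (hi : r i.succ ≠ r i.castSucc) :
    ∑ j, eSum y (r j) * c j < eSum (tensor y c) (∑ j, r j) := by
  have exchange {i j : Fin (m + 1)} (hij : r j < r i) (hle : lu c * c i ≤ c j) :
      ∑ j, eSum y (r j) * c j < eSum (tensor y c) (∑ j, r j) := by
    obtain ⟨a, b, ha, hb, hab⟩ := hlu i j hij
    refine sum_eSum_mul_lt_eSum_tensor hy hr ha hb ?_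
    calc y a * c i < lu c * y b * c i := by gcongr; exact hc i
      _ = y b * (lu c * c i) := by ring
      _ ≤ y b * c j := by gcongr; exact hy0 b
  rcases hi.lt_or_gt with h | h
  · exact exchange h (lu_mul_castSucc_le_succ hc i)
  · exact exchange h (lu_mul_succ_le_castSucc hc hanti i)

lemma sum_eSum_mul_lt_of_const (hy : Antitone y) (hc : 0 < c 0) {p : ℕ}
    {a b : Fin n} (ha : a < p) (hb : p ≤ b) (hab : gu c * y a < y b) :
    ∑ j, eSum y p * c j < eSum (tensor y c) (∑ _ : Fin (m + 1), p) := by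
  refine sum_eSum_mul_lt_eSum_tensor (i := Fin.last m) (j := 0) hy (fun _ ↦ by omega) ha hb ?_
  calc y a * c (Fin.last m) = gu c * y a * c 0 := by
        rw [gu_eq_last_div_zero, mul_right_comm, div_mul_cancel₀ _ hc.ne', mul_comm]
    _ < y b * c 0 := by gcongr

/-- Row `a` is filled in a column of the larger height and row `b` is empty in one of the smaller
height; exchanging the two cells is profitable between neighbouring columns by `hlu`, and between
the last and the first column, at equal heights, by `hgu`. -/
theorem Maj.sMaj_tensor_of_exchange {x : Fin n → ℝ} (hxy : Maj x y) (hy : Antitone y)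
    (hy0 : ∀ i, 0 ≤ y i) (hc : ∀ j, 0 < c j) (hanti : Antitone c)
    (hlu : ∀ p q, p < q → q ≤ n → eSum x p = eSum y p → eSum x q = eSum y q →
      ∃ a b : Fin n, a < q ∧ p ≤ b ∧ y a < lu c * y b)
    (hgu : ∀ p, 0 < p → p < n → eSum x p = eSum y p →
      ∃ a b : Fin n, a < p ∧ p ≤ b ∧ gu c * y a < y b) :
    SMaj (tensor x c) (tensor y c) := by
  refine hxy.sMaj_tensor hc fun r hr heq hr0 hrn ↦ ?_
  by_cases hadj : ∃ i : Fin m, r i.succ ≠ r i.castSucc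
  · obtain ⟨i, hi⟩ := hadj
    exact sum_eSum_mul_lt_of_adjacent_ne hy hy0 hc hanti hr
      (fun i j hij ↦ hlu _ _ hij (hr i) (heq j) (heq i)) hi
  · push Not at hadj
    obtain ⟨p, rfl⟩ : ∃ p, r = fun _ ↦ p :=
      ⟨r 0, funext fun j ↦ j.induction rfl fun i hi ↦ (hadj i).trans hi⟩
    have hp0 : p ≠ 0 := by rintro rfl; simp at hr0
    have hpn : p ≠ n := by rintro rfl; simp [mul_comm] at hrn
    obtain ⟨a, b, ha, hb, hab⟩ := hgu p (by omega) ((hr 0).lt_of_ne hpn) (heq 0)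
    exact sum_eSum_mul_lt_of_const hy (hc 0) ha hb hab

end Contact

/-- Lemma 12 of the paper. If
`l_u(c) > max{y_d/y_1, y_n/y_{d+1}}` and `g_u(c) < y_{d+1}/y_d`, then every
`x ∈ K_d(y)` satisfies `x ⊗ c ◁ y ⊗ c` (1-based indices in the informal
statement, 0-based here). -/
theorem stmt16 {n k : ℕ} (d : ℕ) (hd1 : 1 < d) (hd2 : d + 1 < n)
    (y : Fin n → ℝ) (hy : y ∈ Vn n) (hypos : ∀ i, 0 < y i)
    (c : Fin k → ℝ) (hcpos : ∀ i, 0 < c i) (hcanti : Antitone c)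
    (hlu : lu c > max (y ⟨d - 1, by omega⟩ / y ⟨0, by omega⟩)
                      (y ⟨n - 1, by omega⟩ / y ⟨d, by omega⟩))
    (hgu : gu c < y ⟨d, by omega⟩ / y ⟨d - 1, by omega⟩) :
    ∀ x ∈ Kd y d (by omega), SMaj (tensor x c) (tensor y c) := by
  intro x hx
  obtain ⟨hlu_left, hlu_right⟩ := max_lt_iff.1 hlu
  rw [div_lt_iff₀ (hypos _)] at hlu_left hlu_right
  rw [lt_div_iff₀ (hypos _)] at hgu
  obtain _ | m := k
  · exact ⟨by simp, fun l hl0 hl ↦ by omega⟩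
  refine (kd_subset_sset hy.2.2 hx).2.sMaj_tensor_of_exchange hy.2.2 hy.1 hcpos hcanti ?_ ?_
  · intro p q hpq hqn hp hq
    have hp_cases := eq_zero_or_eq_or_eq_of_mem_kd hy.2.2 hx (hpq.le.trans hqn) hp
    have hq_cases := eq_zero_or_eq_or_eq_of_mem_kd hy.2.2 hx hqn hq
    obtain rfl | rfl : p = 0 ∨ p = d := by omega
    · exact ⟨_, _, by simp only; omega, Nat.zero_le _, hlu_left⟩
    · exact ⟨_, _, by simp only; omega, le_rfl, hlu_right⟩
  · intro p hp0 hpn hp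
    have hp_cases := eq_zero_or_eq_or_eq_of_mem_kd hy.2.2 hx hpn.le hp
    obtain rfl : p = d := by omega
    exact ⟨_, _, Nat.sub_lt hp0 one_pos, le_rfl, hgu⟩

end
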